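/- Let n ≥ 6 and let c' be an integer with 1 ≤ c' ≤ n−3 such that c' is a local maximum of c ↦ r(C_n^c), i.e. r(C_n^{c'−1}) ≤ r(C_n^{c'}) and r(C_n^{c'+1}) ≤ r(C_n^{c'}). Then 2c' < n. -/

import Mathlib

/-- Partial transition function of the PFA `C_n^c`. `false` is letter `a`, `true` is letter `b`. -/
def cernyStep (c n q : ℕ) : Bool → Option ℕ
  | false =>
      if q ≤ n - c - 1 then some (q + 1)
      else if q = n then some 1 else none
  | true =>
      if q ≤ n - c - 1 then some q
      else if q = n then some 1 else some (q + 1)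

/-- Action of a word on a state (`none` if undefined at some step). -/
def cernyRun (c n : ℕ) (q : ℕ) (w : List Bool) : Option ℕ :=
  List.foldlM (cernyStep c n) q w

/-- A word is synchronizing for `C_n^c`. -/
def IsSync (c n : ℕ) (w : List Bool) : Prop :=
  ∃ qs : ℕ, ∀ q ∈ Finset.Icc 1 n, cernyRun c n q w = some qs

/-- The reset threshold of `C_n^c`: minimal length of a synchronizing word. -/
noncomputable def resetThreshold (c n : ℕ) : ℕ :=
  sInf { L : ℕ | ∃ w : List Bool, w.length = L ∧ IsSync c n w }


inductive MTree : Type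
  | leaf : MTree
  | node : MTree → MTree → MTree

namespace MTree

def size : MTree → ℕ
  | leaf => 1
  | node l r => size l + size r

def S : MTree → ℕ
  | leaf => 0
  | node l r => S l + S r + (size l + size r)

def Q : MTree → ℕ
  | leaf => 0
  | node l r => Q l + Q r + size r

def ht : MTree → ℕ
  | leaf => 0
  | node l r => max (ht l) (ht r) + 1

theorem size_pos (t : MTree) : 1 ≤ t.size := by
  induction t with
  | leaf => simp [size]
  | node l r hl hr => simp only [size]; omega

theorem S_le (t : MTree) : t.S ≤ t.size * t.ht := by
  induction t with
  | leaf => simp [S]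
  | node l r hl hr =>
    simp only [S, size, ht]
    have h1 : l.size * l.ht ≤ l.size * max l.ht r.ht := Nat.mul_le_mul_left _ (le_max_left _ _)
    have h2 : r.size * r.ht ≤ r.size * max l.ht r.ht := Nat.mul_le_mul_left _ (le_max_right _ _)
    nlinarith

theorem del (t : MTree) (h : 2 ≤ t.size) :
    ∃ t' : MTree, t'.size + 1 = t.size ∧ t'.S + t.ht + 1 = t.S ∧ t'.Q ≤ t.Q := by
  induction t with
  | leaf => simp [size] at h
  | node l r hl hr =>
    by_cases hh : r.ht ≤ l.ht
    · cases l with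
      | leaf =>
        cases r with
        | leaf => exact ⟨leaf, by simp [size, S, Q, ht]⟩
        | node a b => simp [ht] at hh
      | node a b =>
        have ha := a.size_pos
        have hb := b.size_pos
        obtain ⟨t', h1, h2, h3⟩ := hl (by simp only [size]; omega)
        refine ⟨node t' r, ?_, ?_, ?_⟩
        · simp only [size] at *; omega
        · simp only [S, size, ht] at *; omega
        · simp only [Q, size] at *; omega
    · cases r with
      | leaf => simp [ht] at hh
      | node a b =>
        have ha := a.size_pos
        have hb := b.size_pos
        obtain ⟨t', h1, h2, h3⟩ := hr (by simp only [size]; omega)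
        refine ⟨node l t', ?_, ?_, ?_⟩
        · simp only [size] at *; omega
        · simp only [S, size, ht] at *; omega
        · simp only [Q, size] at *; omega

theorem exists_size (m : ℕ) (hm : 1 ≤ m) : ∃ t : MTree, t.size = m := by
  induction m, hm using Nat.le_induction with
  | base => exact ⟨leaf, rfl⟩
  | succ k hk ih =>
    obtain ⟨t, ht⟩ := ih
    exact ⟨node t leaf, by simp [size, ht]⟩

/-- occupied cells at the start of lap `T` -/
def P : MTree → ℕ → Finset ℕ
  | leaf, _ => {1}
  | node l r, T =>
    if l.size + r.size - 1 ≤ T then {1}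
    else P l T ∪ (if T < r.size - 1 then (P r T).image (· + l.size)
      else {l.size + r.size - T})

/-- kicked cells in lap `T` -/
def X : MTree → ℕ → Finset ℕ
  | leaf, _ => {1}
  | node l r, T =>
    if l.size + r.size - 1 ≤ T then {1}
    else X l T ∪ (if T < r.size - 1 then (X r T).image (· + l.size) else ∅)

theorem P_ge (t : MTree) (T : ℕ) (h : t.size - 1 ≤ T) : t.P T = {1} := by
  cases t with
  | leaf => rfl
  | node l r => simp only [size] at h; simp [P, h]

theorem X_ge (t : MTree) (T : ℕ) (h : t.size - 1 ≤ T) : t.X T = {1} := by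
  cases t with
  | leaf => rfl
  | node l r => simp only [size] at h; simp [X, h]

theorem one_mem_X (t : MTree) (T : ℕ) : 1 ∈ t.X T := by
  induction t with
  | leaf => simp [X]
  | node l r hl hr =>
    by_cases h : l.size + r.size - 1 ≤ T
    · simp [X, h]
    · simp [X, h, hl]

theorem P_bd (t : MTree) (T x : ℕ) (h : x ∈ t.P T) : 1 ≤ x ∧ (x ≤ 1 ∨ x + T ≤ t.size) := by
  induction t generalizing x with
  | leaf => simp [P] at h; omega
  | node l r hl hr =>
    have := l.size_pos
    have := r.size_pos
    by_cases h' : l.size + r.size - 1 ≤ T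
    · simp [P, h'] at h; omega
    · simp only [P, h', if_false, Finset.mem_union] at h
      simp only [size]
      rcases h with h | h
      · have := hl x h; omega
      · split_ifs at h with h2
        · simp only [Finset.mem_image] at h
          obtain ⟨y, hy, rfl⟩ := h
          have := hr y hy
          omega
        · simp at h; omega

theorem X_bd (t : MTree) (T x : ℕ) (h : x ∈ t.X T) : 1 ≤ x ∧ (x ≤ 1 ∨ x + T ≤ t.size) := by
  induction t generalizing x with
  | leaf => simp [X] at h; omega
  | node l r hl hr =>
    have := l.size_pos
    have := r.size_pos
    by_cases h' : l.size + r.size - 1 ≤ T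
    · simp [X, h'] at h; omega
    · simp only [X, h', if_false, Finset.mem_union] at h
      simp only [size]
      rcases h with h | h
      · have := hl x h; omega
      · split_ifs at h with h2
        · simp only [Finset.mem_image] at h
          obtain ⟨y, hy, rfl⟩ := h
          have := hr y hy
          omega
        · simp at h

theorem P_zero (t : MTree) (x : ℕ) (h1 : 1 ≤ x) (h2 : x ≤ t.size) : x ∈ t.P 0 := by
  induction t generalizing x with
  | leaf => simp [P, size] at *; omega
  | node l r hl hr =>
    have := l.size_pos
    have := r.size_pos
    simp only [size] at h2
    have h' : ¬ (l.size + r.size - 1 ≤ 0) := by omega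
    simp only [P, h', if_false, Finset.mem_union]
    by_cases hx : x ≤ l.size
    · exact Or.inl (hl x h1 hx)
    · right
      split_ifs with h3
      · simp only [Finset.mem_image]
        exact ⟨x - l.size, hr _ (by omega) (by omega), by omega⟩
      · simp; omega

theorem P_step (t : MTree) (T x : ℕ) (h : x ∈ t.P T) :
    (if x ∈ t.X T then x else x - 1) ∈ t.P (T + 1) := by
  induction t generalizing x with
  | leaf => simp [P, X] at *; simp [h]
  | node l r hl hr =>
    have hlp := l.size_pos
    have hrp := r.size_pos
    by_cases h' : l.size + r.size - 1 ≤ T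
    · have h'' : l.size + r.size - 1 ≤ T + 1 := by omega
      simp [P, X, h', h''] at *; simp [h]
    · have hb := P_bd (node l r) T x h
      have hP := h
      simp only [P, h', if_false, Finset.mem_union] at h
      rcases h with h | h
      · -- left token
        have e : (x ∈ (node l r).X T) ↔ x ∈ l.X T := by
          simp only [X, h', if_false, Finset.mem_union]
          constructor
          · rintro (h1 | h1)
            · exact h1
            · split_ifs at h1
              · simp only [Finset.mem_image] at h1
                obtain ⟨y, hy, rfl⟩ := h1
                have := P_bd l T _ h
                have := X_bd r T _ hy
                omega
              · simp at h1
          · exact Or.inl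
        rw [if_congr e rfl rfl]
        have key := hl x h
        by_cases h'' : l.size + r.size - 1 ≤ T + 1
        · have := P_ge l (T+1) (by omega)
          rw [this] at key
          simpa [P, h''] using key
        · simp only [P, h'', if_false, Finset.mem_union]
          exact Or.inl key
      · split_ifs at h with h2
        · -- right token, inner
          simp only [Finset.mem_image] at h
          obtain ⟨y, hy, rfl⟩ := h
          have hyb := P_bd r T _ hy
          have e : (y + l.size ∈ (node l r).X T) ↔ y ∈ r.X T := by
            simp only [X, h', if_false, Finset.mem_union, h2, if_true, Finset.mem_image]
            constructor
            · rintro (h1 | h1)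
              · have := X_bd l T _ h1
                omega
              · obtain ⟨z, hz, hzz⟩ := h1
                have : z = y := by omega
                exact this ▸ hz
            · intro h1
              exact Or.inr ⟨y, h1, rfl⟩
          rw [if_congr e rfl rfl]
          have key := hr y hy
          have h'' : ¬ (l.size + r.size - 1 ≤ T + 1) := by omega
          simp only [P, h'', if_false, Finset.mem_union]
          right
          have e2 : (if y ∈ r.X T then y + l.size else y + l.size - 1)
              = (if y ∈ r.X T then y else y - 1) + l.size := by
            split_ifs <;> omega
          rw [e2]
          split_ifs with h3
          all_goals first
            | (simp only [Finset.mem_image]; refine ⟨_, ?_, rfl⟩; simpa [*] using key)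
            | (rw [P_ge r (T+1) (by omega)] at key; simp_all; omega)
        · -- right token, merged
          simp only [Finset.mem_singleton] at h
          have hx2 : 2 ≤ x := by omega
          have e : x ∉ (node l r).X T := by
            simp only [X, h', if_false, Finset.mem_union, h2]
            rintro (h1 | h1)
            · have := X_bd l T _ h1
              omega
            · simp at h1
          rw [if_neg e]
          by_cases h'' : l.size + r.size - 1 ≤ T + 1
          · simp [P, h'']; omega
          · have h3 : ¬ (T + 1 < r.size - 1) := by omega
            simp only [P, h'', if_false, Finset.mem_union, h3]
            right
            simp; omega

theorem sum_split (f g : ℕ → ℕ) (p q k : ℕ) (h : p ≤ q) (hf : ∀ T, T < p → f T = g T)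
    (hk : ∀ T, p ≤ T → f T ≤ k) :
    ∑ T ∈ Finset.range q, f T ≤ (∑ T ∈ Finset.range p, g T) + (q - p) * k := by
  obtain ⟨d, rfl⟩ := Nat.exists_eq_add_of_le h
  rw [Finset.sum_range_add]
  have h1 : ∑ T ∈ Finset.range p, f T = ∑ T ∈ Finset.range p, g T :=
    Finset.sum_congr rfl (fun T hT => hf T (Finset.mem_range.1 hT))
  have h2 : ∑ T ∈ Finset.range d, f (p + T) ≤ ∑ T ∈ Finset.range d, k :=
    Finset.sum_le_sum (fun T _ => hk _ (by omega))
  simp at h2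
  rw [h1]
  simp
  omega

theorem sum_P (t : MTree) : ∑ T ∈ Finset.range (t.size - 1), (t.P T).card ≤ t.S := by
  induction t with
  | leaf => simp [size]
  | node l r hl hr =>
    have hlp := l.size_pos
    have hrp := r.size_pos
    simp only [size, S]
    have h1 : ∀ T ∈ Finset.range (l.size + r.size - 1), ((node l r).P T).card ≤
        (l.P T).card + (if T < r.size - 1 then (r.P T).card else 1) := by
      intro T hT
      have h' : ¬ (l.size + r.size - 1 ≤ T) := by have := Finset.mem_range.1 hT; omega
      simp only [P, h', if_false]
      refine (Finset.card_union_le _ _).trans (Nat.add_le_add_left ?_ _)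
      split_ifs
      · exact Finset.card_image_le
      · simp
    refine (Finset.sum_le_sum h1).trans ?_
    rw [Finset.sum_add_distrib]
    have h2 := sum_split (fun T => (l.P T).card) (fun T => (l.P T).card) (l.size - 1)
      (l.size + r.size - 1) 1 (by omega) (fun _ _ => rfl) (by
        intro T hT
        simp [P_ge l T hT])
    have h3 := sum_split (fun T => if T < r.size - 1 then (r.P T).card else 1)
      (fun T => (r.P T).card) (r.size - 1)
      (l.size + r.size - 1) 1 (by omega) (fun T hT => by simp [hT]) (by
        intro T hT
        simp [not_lt.2 hT])
    omega

theorem sum_X (t : MTree) : ∑ T ∈ Finset.range (t.size - 1), (t.X T).card ≤ t.Q := by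
  induction t with
  | leaf => simp [size]
  | node l r hl hr =>
    have hlp := l.size_pos
    have hrp := r.size_pos
    simp only [size, Q]
    have h1 : ∀ T ∈ Finset.range (l.size + r.size - 1), ((node l r).X T).card ≤
        (l.X T).card + (if T < r.size - 1 then (r.X T).card else 0) := by
      intro T hT
      have h' : ¬ (l.size + r.size - 1 ≤ T) := by have := Finset.mem_range.1 hT; omega
      simp only [X, h', if_false]
      refine (Finset.card_union_le _ _).trans (Nat.add_le_add_left ?_ _)
      split_ifs
      · exact Finset.card_image_le
      · simp
    refine (Finset.sum_le_sum h1).trans ?_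
    rw [Finset.sum_add_distrib]
    have h2 := sum_split (fun T => (l.X T).card) (fun T => (l.X T).card) (l.size - 1)
      (l.size + r.size - 1) 1 (by omega) (fun _ _ => rfl) (by
        intro T hT
        simp [X_ge l T hT])
    have h3 := sum_split (fun T => if T < r.size - 1 then (r.X T).card else 0)
      (fun T => (r.X T).card) (r.size - 1)
      (l.size + r.size - 1) 0 (by omega) (fun T hT => by simp [hT]) (by
        intro T hT
        simp [not_lt.2 hT])
    omega

end MTree


theorem run_app (c n q : ℕ) (u v : List Bool) (p : ℕ) (h : cernyRun c n q u = some p) :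
    cernyRun c n q (u ++ v) = cernyRun c n p v := by
  unfold cernyRun at *
  rw [List.foldlM_append, h]
  rfl

theorem run_cons (c n q : ℕ) (x : Bool) (v : List Bool) (p : ℕ) (h : cernyStep c n q x = some p) :
    cernyRun c n q (x :: v) = cernyRun c n p v := by
  unfold cernyRun at *
  rw [List.foldlM_cons, h]
  rfl

theorem run_nil (c n q : ℕ) : cernyRun c n q [] = some q := rfl

/-- low states are fixed by `b` -/
theorem run_b_low (c m q k : ℕ) (h : q ≤ m) :
    cernyRun c (m + 1 + c) q (List.replicate k true) = some q := by
  induction k with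
  | zero => rfl
  | succ k ih =>
    rw [List.replicate_succ, run_cons (p := q), ih]
    have : q ≤ m + 1 + c - c - 1 := by omega
    simp only [cernyStep, this, if_true]

theorem run_b_high (c m q k : ℕ) (h : m < q) (h2 : q + k ≤ m + 1 + c) :
    cernyRun c (m + 1 + c) q (List.replicate k true) = some (q + k) := by
  induction k generalizing q with
  | zero => rfl
  | succ k ih =>
    rw [List.replicate_succ, run_cons (p := q + 1), ih]
    · congr 1; omega
    · omega
    · omega
    have h3 : ¬ (q ≤ m + 1 + c - c - 1) := by omega
    have h4 : ¬ (q = m + 1 + c) := by omega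
    simp only [cernyStep, h3, h4, if_false]

theorem step_b_top (c m : ℕ) : cernyStep c (m + 1 + c) (m + 1 + c) true = some 1 := by
  have h3 : ¬ (m + 1 + c ≤ m + 1 + c - c - 1) := by omega
  simp only [cernyStep, h3, if_false, if_true]

theorem step_a_top (c m : ℕ) : cernyStep c (m + 1 + c) (m + 1 + c) false = some 1 := by
  have h3 : ¬ (m + 1 + c ≤ m + 1 + c - c - 1) := by omega
  simp only [cernyStep, h3, if_false, if_true]

theorem step_a_low (c m q : ℕ) (h : q ≤ m) :
    cernyStep c (m + 1 + c) q false = some (q + 1) := by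
  have h3 : q ≤ m + 1 + c - c - 1 := by omega
  simp only [cernyStep, h3, if_true]

def segW (c : ℕ) (P X : Finset ℕ) (j : ℕ) : List Bool :=
  false :: (if j ∈ P then List.replicate c true ++ List.replicate (if j ∈ X then 1 else 0) true
    else [])

def lapW (c : ℕ) (P X : Finset ℕ) : ℕ → List Bool
  | 0 => []
  | j + 1 => segW c P X (j + 1) ++ lapW c P X j

theorem lapW_length (c : ℕ) (P X : Finset ℕ) (j : ℕ) :
    (lapW c P X j).length ≤ j + c * (P ∩ Finset.Icc 1 j).card + (X ∩ Finset.Icc 1 j).card := by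
  induction j with
  | zero => simp [lapW]
  | succ j ih =>
    have hI : Finset.Icc 1 (j + 1) = insert (j + 1) (Finset.Icc 1 j) := by
      ext x; simp; omega
    have key : ∀ A : Finset ℕ, (A ∩ Finset.Icc 1 (j+1)).card =
        (A ∩ Finset.Icc 1 j).card + (if j + 1 ∈ A then 1 else 0) := by
      intro A
      rw [hI]
      split_ifs with h
      · rw [Finset.inter_insert_of_mem h, Finset.card_insert_of_notMem (by simp)]
      · rw [Finset.inter_insert_of_notMem h]; rfl
    rw [key, key]
    simp only [lapW, segW, List.length_append, List.length_cons]
    by_cases h1 : j + 1 ∈ P <;> by_cases h2 : j + 1 ∈ X <;> simp [h1, h2, Nat.mul_add] <;> omega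

theorem seg_low (c m : ℕ) (P X : Finset ℕ) (j q : ℕ) (v : List Bool) (h : q + 1 ≤ m) :
    cernyRun c (m + 1 + c) q (segW c P X j ++ v) = cernyRun c (m + 1 + c) (q + 1) v := by
  unfold segW
  rw [List.cons_append, run_cons _ _ _ _ _ _ (step_a_low c m q (by omega))]
  split_ifs
  · rw [List.append_assoc, run_app _ _ _ _ _ _ (run_b_low c m (q+1) c h),
      run_app _ _ _ _ _ _ (run_b_low c m (q+1) _ h)]
  · rw [List.append_assoc, run_app _ _ _ _ _ _ (run_b_low c m (q+1) c h),
      run_app _ _ _ _ _ _ (run_b_low c m (q+1) _ h)]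
  · rfl

theorem seg_top (c m : ℕ) (P X : Finset ℕ) (j : ℕ) (v : List Bool) (h : 1 ≤ m) :
    cernyRun c (m + 1 + c) (m + 1 + c) (segW c P X j ++ v) = cernyRun c (m + 1 + c) 1 v := by
  unfold segW
  rw [List.cons_append, run_cons _ _ _ _ _ _ (step_a_top c m)]
  split_ifs
  · rw [List.append_assoc, run_app _ _ _ _ _ _ (run_b_low c m 1 c h),
      run_app _ _ _ _ _ _ (run_b_low c m 1 _ h)]
  · rw [List.append_assoc, run_app _ _ _ _ _ _ (run_b_low c m 1 c h),
      run_app _ _ _ _ _ _ (run_b_low c m 1 _ h)]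
  · rfl

theorem lap_low (c m : ℕ) (P X : Finset ℕ) (j q : ℕ) (h : q + j ≤ m) :
    cernyRun c (m + 1 + c) q (lapW c P X j) = some (q + j) := by
  induction j generalizing q with
  | zero => rfl
  | succ j ih =>
    rw [lapW, seg_low _ _ _ _ _ _ _ (by omega), ih _ (by omega)]
    congr 1; omega

theorem lap_run (c m : ℕ) (P X : Finset ℕ) (j x : ℕ) (hx : 1 ≤ x) (hxj : x ≤ j) (hj : j ≤ m)
    (hP : x ∈ P) (h1 : 1 ∈ X) :
    cernyRun c (m + 1 + c) (x + (m - j)) (lapW c P X j) = some (if x ∈ X then x else x - 1) := by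
  induction j with
  | zero => omega
  | succ j ih =>
    by_cases hxe : x = j + 1
    · subst hxe
      have e : j + 1 + (m - (j + 1)) = m := by omega
      rw [e, lapW, segW, List.cons_append, run_cons _ _ _ _ _ _ (step_a_low c m m le_rfl),
        if_pos hP, List.append_assoc, run_app _ _ _ _ _ _ (run_b_high c m (m+1) c (by omega) le_rfl)]
      by_cases hX : j + 1 ∈ X
      · rw [if_pos hX, if_pos hX]
        change cernyRun c (m + 1 + c) (m + 1 + c) (true :: lapW c P X j) = _
        rw [run_cons _ _ _ _ _ _ (step_b_top c m), lap_low _ _ _ _ _ _ (by omega)]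
        congr 1; omega
      · rw [if_neg hX, if_neg hX]
        change cernyRun c (m + 1 + c) (m + 1 + c) (lapW c P X j) = _
        cases j with
        | zero => exact absurd h1 hX
        | succ j =>
          rw [lapW, seg_top _ _ _ _ _ _ (by omega), lap_low _ _ _ _ _ _ (by omega)]
          congr 1; omega
    · rw [lapW, seg_low _ _ _ _ _ _ _ (by omega)]
      have := ih (by omega) (by omega)
      rw [← this]
      congr 1; omega

def allW (c m : ℕ) (t : MTree) : ℕ → List Bool
  | 0 => []
  | T + 1 => allW c m t T ++ lapW c (t.P T) (t.X T) m

theorem allW_length (c m : ℕ) (t : MTree) (T : ℕ) :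
    (allW c m t T).length ≤ T * m + c * ∑ s ∈ Finset.range T, (t.P s).card
      + ∑ s ∈ Finset.range T, (t.X s).card := by
  induction T with
  | zero => simp [allW]
  | succ T ih =>
    rw [allW, List.length_append, Finset.sum_range_succ, Finset.sum_range_succ]
    have h := lapW_length c (t.P T) (t.X T) m
    have h1 := Finset.card_le_card (Finset.inter_subset_left (s₁ := t.P T) (s₂ := Finset.Icc 1 m))
    have h2 := Finset.card_le_card (Finset.inter_subset_left (s₁ := t.X T) (s₂ := Finset.Icc 1 m))
    have h3 := Nat.mul_le_mul_left c h1
    nlinarith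

theorem allW_run (c : ℕ) (t : MTree) (T x : ℕ) (h1 : 1 ≤ x) (h2 : x ≤ t.size) :
    ∃ y ∈ t.P T, cernyRun c (t.size + 1 + c) x (allW c t.size t T) = some y := by
  induction T with
  | zero => exact ⟨x, t.P_zero x h1 h2, rfl⟩
  | succ T ih =>
    obtain ⟨y, hy, hr⟩ := ih
    refine ⟨_, t.P_step T y hy, ?_⟩
    have hb := t.P_bd T y hy
    have := t.size_pos
    rw [allW, run_app _ _ _ _ _ _ hr]
    have := lap_run c t.size (t.P T) (t.X T) t.size y hb.1 (by omega) le_rfl hy (t.one_mem_X T)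
    rwa [Nat.sub_self, Nat.add_zero] at this

theorem upper (c : ℕ) (t : MTree) : ∃ w : List Bool, IsSync c (t.size + 1 + c) w ∧
    w.length ≤ c + 1 + t.size * (t.size - 1) + c * t.S + t.Q := by
  have hp := t.size_pos
  refine ⟨List.replicate (c + 1) true ++ allW c t.size t (t.size - 1), ⟨1, ?_⟩, ?_⟩
  · intro q hq
    rw [Finset.mem_Icc] at hq
    have h0 : ∃ p, 1 ≤ p ∧ p ≤ t.size ∧
        cernyRun c (t.size + 1 + c) q (List.replicate (c + 1) true) = some p := by
      by_cases h : q ≤ t.size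
      · exact ⟨q, hq.1, h, run_b_low _ _ _ _ h⟩
      · refine ⟨1, le_rfl, hp, ?_⟩
        have e : c + 1 = (t.size + 1 + c - q) + ((q - t.size - 1) + 1) := by omega
        rw [e, List.replicate_add, run_app _ _ _ _ _ _
          (run_b_high c t.size q (t.size + 1 + c - q) (by omega) (by omega))]
        rw [show q + (t.size + 1 + c - q) = t.size + 1 + c by omega, List.replicate_succ,
          run_cons _ _ _ _ _ _ (step_b_top c t.size)]
        exact run_b_low _ _ _ _ hp
    obtain ⟨p, hp1, hp2, hpr⟩ := h0
    rw [run_app _ _ _ _ _ _ hpr]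
    obtain ⟨y, hy, hr⟩ := allW_run c t (t.size - 1) p hp1 hp2
    rw [t.P_ge _ le_rfl, Finset.mem_singleton] at hy
    rw [hr, hy]
  · rw [List.length_append, List.length_replicate]
    have h := allW_length c t.size t (t.size - 1)
    have h1 := Nat.mul_le_mul_left c t.sum_P
    have h2 := t.sum_X
    have h3 : t.size * (t.size - 1) = (t.size - 1) * t.size := Nat.mul_comm _ _
    omega


def cA (x : ℕ → Bool) (t : ℕ) : ℕ := ∑ s ∈ Finset.range t, if x s = true then 0 else 1
def cK (x : ℕ → Bool) (n : ℕ) (q : ℕ → ℕ) (t : ℕ) : ℕ :=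
  ∑ s ∈ Finset.range t, if x s = true ∧ q s = n then 1 else 0
def cL (n : ℕ) (q : ℕ → ℕ) (t : ℕ) : ℕ := ∑ s ∈ Finset.range t, if q s = n then 1 else 0
def cH (x : ℕ → Bool) (m : ℕ) (q : ℕ → ℕ) (t : ℕ) : ℕ :=
  ∑ s ∈ Finset.range t, if x s = true ∧ m < q s then 1 else 0

/-- `q` is a run of a single token under the letters `x` up to time `L`, from a low state -/
def Tok (c m L : ℕ) (x : ℕ → Bool) (q : ℕ → ℕ) : Prop :=
  1 ≤ q 0 ∧ q 0 ≤ m ∧ ∀ t < L, cernyStep c (m + 1 + c) (q t) (x t) = some (q (t + 1))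

theorem step_cases (c m q q' : ℕ) (x : Bool) (h2 : q ≤ m + 1 + c)
    (h : cernyStep c (m + 1 + c) q x = some q') :
    (q ≤ m ∧ x = false ∧ q' = q + 1) ∨ (q ≤ m ∧ x = true ∧ q' = q) ∨
    (q = m + 1 + c ∧ q' = 1) ∨ (m < q ∧ q < m + 1 + c ∧ x = true ∧ q' = q + 1) := by
  have e : m + 1 + c - c - 1 = m := by omega
  cases x <;> simp only [cernyStep, e] at h <;> split_ifs at h <;> simp at h <;> simp <;> omega

theorem tok_inv {c m L : ℕ} {x : ℕ → Bool} {q : ℕ → ℕ} (hq : Tok c m L x q) (t : ℕ) (ht : t ≤ L) :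
    1 ≤ q t ∧ q t ≤ m + 1 + c ∧
    q 0 + cK x (m + 1 + c) q t + cA x t = min (q t) (m + 1) + (m + 1) * cL (m + 1 + c) q t ∧
    cH x m q t = c * cL (m + 1 + c) q t + (q t - (m + 1)) + cK x (m + 1 + c) q t ∧
    cK x (m + 1 + c) q t ≤ cL (m + 1 + c) q t := by
  obtain ⟨h1, h2, h3⟩ := hq
  induction t with
  | zero => simp [cK, cA, cL, cH]; omega
  | succ t ih =>
    obtain ⟨i1, i2, i3, i4, i5⟩ := ih (by omega)
    have hc := step_cases c m _ _ _ i2 (h3 t (by omega))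
    have eK : cK x (m + 1 + c) q (t+1) = cK x (m + 1 + c) q t +
      if x t = true ∧ q t = m + 1 + c then 1 else 0 := Finset.sum_range_succ _ _
    have eA : cA x (t+1) = cA x t + if x t = true then 0 else 1 := Finset.sum_range_succ _ _
    have eL : cL (m + 1 + c) q (t+1) = cL (m + 1 + c) q t +
      if q t = m + 1 + c then 1 else 0 := Finset.sum_range_succ _ _
    have eH : cH x m q (t+1) = cH x m q t +
      if x t = true ∧ m < q t then 1 else 0 := Finset.sum_range_succ _ _
    rw [eK, eA, eL, eH]
    rcases hc with ⟨a1, a2, a3⟩ | ⟨a1, a2, a3⟩ | ⟨a1, a3⟩ | ⟨a1, a0, a2, a3⟩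
    · have b1 : ¬ (q t = m + 1 + c) := by omega
      have b2 : ¬ (m < q t) := by omega
      simp [a2, b1]
      refine ⟨by omega, by omega, by omega, by omega, by omega⟩
    · have b1 : ¬ (q t = m + 1 + c) := by omega
      have b2 : ¬ (m < q t) := by omega
      simp only [a2, b1, b2, and_false, if_false, if_true, Nat.add_zero]
      refine ⟨by omega, by omega, by omega, by omega, by omega⟩
    · have b2 : m < q t := by omega
      simp only [a1] at *
      cases hx : x t <;> simp [b2, Nat.mul_add]
      all_goals refine ⟨by omega, by omega, by omega, by omega, by omega⟩
    · have b1 : ¬ (q t = m + 1 + c) := by omega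
      simp only [a1, b1, a2, and_true, true_and, if_false, if_true, Nat.add_zero]
      refine ⟨by omega, by omega, by omega, by omega, by omega⟩

theorem tok_uniq {c m L : ℕ} {x : ℕ → Bool} {q r : ℕ → ℕ} (hq : Tok c m L x q)
    (hr : Tok c m L x r) (t : ℕ) (ht : t ≤ L) (h1 : m < q t) (h2 : m < r t) : q t = r t := by
  induction t with
  | zero => have := hq.2.1; omega
  | succ t ih =>
    have i1 := (tok_inv hq t (by omega)).2.1
    have i2 := (tok_inv hr t (by omega)).2.1
    have ih' := ih (by omega)
    rcases step_cases c m _ _ _ i1 (hq.2.2 t (by omega)) with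
      ⟨a1, a2, a3⟩ | ⟨a1, a2, a3⟩ | ⟨a1, a3⟩ | ⟨a1, a0, a2, a3⟩ <;>
    rcases step_cases c m _ _ _ i2 (hr.2.2 t (by omega)) with
      ⟨b1, b2, b3⟩ | ⟨b1, b2, b3⟩ | ⟨b1, b3⟩ | ⟨b1, b0, b2, b3⟩ <;>
    first
      | omega
      | (rw [a2] at b2; simp at b2)

def Xf (m c : ℕ) (q : ℕ → ℕ) (d t : ℕ) : ℕ :=
  min (q t) (m + 1) + (m + 1) * (cL (m + 1 + c) q t + d)

theorem divmod_uniq (N a b r s : ℕ) (hr : 1 ≤ r) (hr' : r ≤ N) (hs : 1 ≤ s) (hs' : s ≤ N)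
    (h : r + N * a = s + N * b) : a = b ∧ r = s := by
  have : a = b := by
    rcases lt_trichotomy a b with h1 | h1 | h1
    · have := Nat.mul_le_mul_left N (Nat.succ_le_of_lt h1)
      rw [Nat.mul_succ] at this
      omega
    · exact h1
    · have := Nat.mul_le_mul_left N (Nat.succ_le_of_lt h1)
      rw [Nat.mul_succ] at this
      omega
  subst this
  exact ⟨rfl, by omega⟩

theorem Xf_eq {c m L : ℕ} {x : ℕ → Bool} {q r : ℕ → ℕ} (hq : Tok c m L x q)
    (hr : Tok c m L x r) (d e t : ℕ) (ht : t ≤ L) (h : Xf m c q d t = Xf m c r e t) :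
    q t = r t ∧ cL (m + 1 + c) q t + d = cL (m + 1 + c) r t + e := by
  have i1 := tok_inv hq t ht
  have i2 := tok_inv hr t ht
  have := divmod_uniq (m+1) _ _ _ _ (by omega) (by omega) (by omega) (by omega) h
  refine ⟨?_, this.1⟩
  have h2 := this.2
  by_cases h3 : m < q t
  · exact tok_uniq hq hr t ht h3 (by omega)
  · omega

theorem Xf_step {c m L : ℕ} {x : ℕ → Bool} {q : ℕ → ℕ} (hq : Tok c m L x q)
    (d t : ℕ) (ht : t < L) :
    Xf m c q d t ≤ Xf m c q d (t+1) ∧ Xf m c q d (t+1) ≤ Xf m c q d t + 1 := by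
  have i1 := tok_inv hq t (by omega)
  have eL : cL (m + 1 + c) q (t+1) = cL (m + 1 + c) q t +
      if q t = m + 1 + c then 1 else 0 := Finset.sum_range_succ _ _
  unfold Xf
  rw [eL]
  rcases step_cases c m _ _ _ i1.2.1 (hq.2.2 t ht) with
      ⟨a1, a2, a3⟩ | ⟨a1, a2, a3⟩ | ⟨a1, a3⟩ | ⟨a1, a0, a2, a3⟩
  · rw [if_neg (by omega)]; simp only [Nat.add_zero]; omega
  · rw [if_neg (by omega)]; simp only [Nat.add_zero]; omega
  · rw [if_pos a1]; simp only [Nat.mul_add]; omega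
  · rw [if_neg (by omega)]; simp only [Nat.add_zero]; omega

theorem Xf_le {c m L : ℕ} {x : ℕ → Bool} {q r : ℕ → ℕ} (hq : Tok c m L x q)
    (hr : Tok c m L x r) (d e s t : ℕ) (hst : s ≤ t) (ht : t ≤ L)
    (h : Xf m c q d s ≤ Xf m c r e s) : Xf m c q d t ≤ Xf m c r e t := by
  induction t, hst using Nat.le_induction with
  | base => exact h
  | succ t hst ih =>
    have ih := ih (by omega)
    have s1 := Xf_step hq d t (by omega)
    have s2 := Xf_step hr e t (by omega)
    rcases Nat.lt_or_eq_of_le ih with h1 | h1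
    · omega
    · have h2 := Xf_eq hq hr d e t (by omega) h1
      have e1 := hq.2.2 t (by omega)
      have e2 := hr.2.2 t (by omega)
      rw [h2.1, e2] at e1
      have e3 : r (t+1) = q (t+1) := by simpa using e1
      have eL : cL (m + 1 + c) q (t+1) = cL (m + 1 + c) q t +
        if q t = m + 1 + c then 1 else 0 := Finset.sum_range_succ _ _
      have eL' : cL (m + 1 + c) r (t+1) = cL (m + 1 + c) r t +
        if r t = m + 1 + c then 1 else 0 := Finset.sum_range_succ _ _
      unfold Xf
      rw [e3, eL, eL', h2.1, Nat.add_right_comm, h2.2, Nat.add_right_comm]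

theorem tree_of (c : ℕ) (τ f : ℕ → ℕ) (s : ℕ) : ∀ l : ℕ, 1 ≤ s →
    (∀ a i b, l ≤ a → a ≤ i → i < b → b < l + s → (∀ y, a ≤ y → y < b → τ y ≤ τ i) →
      c * (b - a) + (b - i) ≤ f i) →
    ∃ t : MTree, t.size = s ∧ c * t.S + t.Q ≤ (∑ i ∈ Finset.Ico l (l + s - 1), f i) + c * (s - 1) := by
  induction s using Nat.strong_induction_on with
  | _ s ih =>
    intro l hs hw
    by_cases h1 : s = 1
    · subst h1
      exact ⟨MTree.leaf, by simp [MTree.size, MTree.S, MTree.Q]⟩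
    · obtain ⟨i, hi, hmax⟩ := Finset.exists_max_image (Finset.Ico l (l + s - 1)) τ
        ⟨l, by simp; omega⟩
      rw [Finset.mem_Ico] at hi
      obtain ⟨tl, hl1, hl2⟩ := ih (i - l + 1) (by omega) l (by omega)
        (fun a j b h1 h2 h3 h4 h5 => hw a j b h1 h2 h3 (by omega) h5)
      obtain ⟨tr, hr1, hr2⟩ := ih (l + s - 1 - i) (by omega) (i + 1) (by omega)
        (fun a j b h1 h2 h3 h4 h5 => hw a j b (by omega) h2 h3 (by omega) h5)
      have hf := hw l i (l + s - 1) le_rfl hi.1 hi.2 (by omega)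
        (fun y hy1 hy2 => hmax y (by rw [Finset.mem_Ico]; exact ⟨hy1, hy2⟩))
      refine ⟨MTree.node tl tr, by simp only [MTree.size]; omega, ?_⟩
      have e1 : ∑ j ∈ Finset.Ico l (l + s - 1), f j =
          (∑ j ∈ Finset.Ico l i, f j) + (f i + ∑ j ∈ Finset.Ico (i+1) (l + s - 1), f j) := by
        rw [← Finset.sum_eq_sum_Ico_succ_bot hi.2, Finset.sum_Ico_consecutive _ hi.1 (by omega)]
      rw [e1]
      simp only [MTree.S, MTree.Q, hl1, hr1]
      obtain ⟨u, rfl⟩ := Nat.exists_eq_add_of_le hi.1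
      obtain ⟨v, hv⟩ : ∃ v, l + s - 1 = l + u + 1 + v := ⟨l + s - 1 - (l + u) - 1, by omega⟩
      have hs' : s = u + v + 2 := by omega
      rw [show l + (l + u - l + 1) - 1 = l + u by omega, show l + u - l + 1 - 1 = u by omega] at hl2
      rw [show l + u + 1 + (l + s - 1 - (l + u)) - 1 = l + s - 1 by omega,
        show l + s - 1 - (l + u) - 1 = v by omega] at hr2
      rw [show l + s - 1 - l = u + v + 1 by omega, show l + s - 1 - (l + u) = v + 1 by omega] at hf
      rw [show l + u - l + 1 + (l + s - 1 - (l + u)) = u + v + 2 by omega,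
        show s - 1 = u + v + 1 by omega, show l + s - 1 - (l + u) = v + 1 by omega]
      nlinarith

theorem lower_abs (c m L K0 : ℕ) (hm : 1 ≤ m) (x : ℕ → Bool) (q : ℕ → ℕ → ℕ) (d : ℕ → ℕ)
    (hq : ∀ j < m, Tok c m L x (q j))
    (hz : ∀ j < m, q j 0 + m * d j = K0 + j)
    (hd : ∀ i j, i ≤ j → j < m → d i ≤ d j)
    (hfin : ∀ i j, i < m → j < m → Xf m c (q i) (d i) L = Xf m c (q j) (d j) L) :
    ∃ t : MTree, t.size = m ∧ c * t.S + t.Q + (m - 1) * (m - 1) ≤ L := by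
  have X0 : ∀ j, Xf m c (q j) (d j) 0 = min (q j 0) (m + 1) + (m + 1) * d j := by
    intro j; simp [Xf, cL]
  have Xt : ∀ j < m, ∀ t ≤ L, Xf m c (q j) (d j) t =
      K0 + j + d j + cK x (m + 1 + c) (q j) t + cA x t := by
    intro j hj t ht
    have h1 := tok_inv (hq j hj) t ht
    have h2 := hz j hj
    unfold Xf
    rw [Nat.mul_add, Nat.add_mul m 1 (d j)]
    omega
  have mono : ∀ i j, i ≤ j → j < m → ∀ t ≤ L,
      Xf m c (q i) (d i) t ≤ Xf m c (q j) (d j) t := by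
    intro i j hij hj t ht
    refine Xf_le (hq i (by omega)) (hq j hj) _ _ 0 t (by omega) ht ?_
    rw [Xt i (by omega) 0 (by omega), Xt j hj 0 (by omega)]
    have := hd i j hij hj
    simp [cK]; omega
  have persist : ∀ i j, i < m → j < m → ∀ s t, s ≤ t → t ≤ L →
      Xf m c (q i) (d i) s = Xf m c (q j) (d j) s →
      Xf m c (q i) (d i) t = Xf m c (q j) (d j) t := by
    intro i j hi hj s t hst ht h
    exact le_antisymm (Xf_le (hq i hi) (hq j hj) _ _ s t hst ht h.le)
      (Xf_le (hq j hj) (hq i hi) _ _ s t hst ht h.ge)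
  -- key window estimate
  have window : ∀ a i b t, a ≤ i → i ≤ b → b < m → t ≤ L →
      Xf m c (q a) (d a) t = Xf m c (q b) (d b) t →
      b - a ≤ cL (m + 1 + c) (q i) t ∧ b - i ≤ cK x (m + 1 + c) (q i) t := by
    intro a i b t hai hib hb ht h
    have hi : Xf m c (q i) (d i) t = Xf m c (q b) (d b) t :=
      le_antisymm (mono i b hib hb t ht) (h ▸ mono a i hai (by omega) t ht)
    have ha2 := (Xf_eq (hq a (by omega)) (hq i (by omega)) _ _ t ht (h.trans hi.symm)).2
    have d1 := hd a i hai (by omega)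
    have d2 := hd i b hib hb
    have ka := (tok_inv (hq a (by omega)) t ht).2.2.2.2
    rw [Xt a (by omega) t ht, Xt b hb t ht] at h
    rw [Xt i (by omega) t ht, Xt b hb t ht] at hi
    omega
  -- merge times
  have hτ : ∀ j, ∃ τ, τ ≤ L ∧ (j + 1 < m → Xf m c (q j) (d j) τ = Xf m c (q (j+1)) (d (j+1)) τ ∧
      ∀ t < τ, Xf m c (q j) (d j) t ≠ Xf m c (q (j+1)) (d (j+1)) t) ∧ (¬ j + 1 < m → τ = L) := by
    intro j
    by_cases hj : j + 1 < m
    · have hex : ∃ t, Xf m c (q j) (d j) t = Xf m c (q (j+1)) (d (j+1)) t :=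
        ⟨L, hfin _ _ (by omega) hj⟩
      exact ⟨Nat.find hex, Nat.find_le (hfin _ _ (by omega) hj),
        fun _ => ⟨Nat.find_spec hex, fun t ht => Nat.find_min hex ht⟩, fun h => absurd hj h⟩
    · exact ⟨L, le_rfl, fun h => absurd h hj, fun _ => rfl⟩
  choose τ τL τ1 τ2 using hτ
  -- disjointness
  have disj : ∑ j ∈ Finset.range m, cH x m (q j) (τ j) + cA x L ≤ L := by
    have e1 : ∀ j ∈ Finset.range m, cH x m (q j) (τ j) =
        ∑ s ∈ Finset.range L, if s < τ j ∧ x s = true ∧ m < q j s then 1 else 0 := by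
      intro j _
      unfold cH
      obtain ⟨k, hk⟩ := Nat.exists_eq_add_of_le (τL j)
      rw [hk, Finset.sum_range_add]
      have : ∑ s ∈ Finset.range k, (if τ j + s < τ j ∧ x (τ j + s) = true ∧ m < q j (τ j + s)
          then 1 else 0) = 0 := Finset.sum_eq_zero (fun s _ => by simp)
      rw [this, Nat.add_zero]
      refine Finset.sum_congr rfl (fun s hs => ?_)
      simp [Finset.mem_range.1 hs]
    rw [Finset.sum_congr rfl e1, Finset.sum_comm, cA, ← Finset.sum_add_distrib]
    have e2 : ∀ s ∈ Finset.range L, (∑ j ∈ Finset.range m,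
        if s < τ j ∧ x s = true ∧ m < q j s then 1 else 0) + (if x s = true then 0 else 1) ≤ 1 := by
      intro s hs
      have hsL := Finset.mem_range.1 hs
      by_cases hx : x s = true
      · rw [if_pos hx, Nat.add_zero, ← Finset.card_filter, Finset.card_le_one]
        have main : ∀ i j, i < j → j < m → s < τ i → m < q i s → m < q j s → False := by
          intro i j hij hj h1 h2 h3
          have hqe := tok_uniq (hq i (by omega)) (hq j hj) s (by omega) h2 h3
          have hle := mono i j hij.le hj s (by omega)
          have hne := (τ1 i (by omega)).2 s h1
          have hm1 := mono i (i+1) (by omega) (by omega) s (by omega)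
          have hm2 := mono (i+1) j (by omega) hj s (by omega)
          have hlt : Xf m c (q i) (d i) s < Xf m c (q j) (d j) s := by omega
          have hlt2 : cL (m + 1 + c) (q i) s + d i < cL (m + 1 + c) (q j) s + d j := by
            by_contra hcon
            have := Nat.mul_le_mul_left (m + 1) (not_lt.1 hcon)
            unfold Xf at hlt
            rw [hqe] at hlt
            omega
          have hX : Xf m c (q i) (d i + 1) s ≤ Xf m c (q j) (d j) s := by
            unfold Xf
            rw [hqe]
            exact Nat.add_le_add_left (Nat.mul_le_mul_left _ (by omega)) _
          have hX2 := Xf_le (hq i (by omega)) (hq j hj) _ _ s L (by omega) le_rfl hX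
          have hX3 := hfin i j (by omega) hj
          rw [← hX3] at hX2
          unfold Xf at hX2
          have := Nat.mul_add (m+1) (cL (m + 1 + c) (q i) L + d i) 1
          rw [← Nat.add_assoc (cL (m + 1 + c) (q i) L) (d i) 1, this] at hX2
          omega
        intro i hi j hj
        simp only [Finset.mem_filter, Finset.mem_range] at hi hj
        rcases lt_trichotomy i j with h | h | h
        · exact (main i j h hj.1 hi.2.1 hi.2.2.2 hj.2.2.2).elim
        · exact h
        · exact (main j i h hi.1 hj.2.1 hj.2.2.2 hi.2.2.2).elim
      · simp [hx]
    refine (Finset.sum_le_sum e2).trans ?_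
    simp
  obtain ⟨t, ht1, ht2⟩ := tree_of c τ (fun j => cH x m (q j) (τ j)) m 0 hm (by
    intro a i b _ hai hib hb hmax
    have hchain : ∀ y, a ≤ y → y ≤ b →
        Xf m c (q a) (d a) (τ i) = Xf m c (q y) (d y) (τ i) := by
      intro y hy
      induction y, hy using Nat.le_induction with
      | base => intro _; rfl
      | succ y hy ih =>
        intro hyb
        rw [ih (by omega)]
        exact persist y (y+1) (by omega) (by omega) (τ y) (τ i) (hmax y hy (by omega)) (τL i)
          (τ1 y (by omega)).1
    have hw := window a i b (τ i) hai hib.le (by omega) (τL i) (hchain b (by omega) le_rfl)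
    have hH := (tok_inv (hq i (by omega)) (τ i) (τL i)).2.2.2.1
    have := Nat.mul_le_mul_left c hw.1
    omega)
  refine ⟨t, ht1, ?_⟩
  have hlast : c * (m - 1) ≤ cH x m (q (m-1)) (τ (m-1)) := by
    rw [τ2 (m-1) (by omega)]
    have hw := window 0 (m-1) (m-1) L (by omega) le_rfl (by omega) le_rfl
      (hfin _ _ (by omega) (by omega))
    have hH := (tok_inv (hq (m-1) (by omega)) L le_rfl).2.2.2.1
    have := Nat.mul_le_mul_left c hw.1
    simp only [Nat.sub_zero] at this
    omega
  have hA : (m - 1) * (m - 1) ≤ cA x L := by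
    have hw := window 0 0 (m-1) L (by omega) (by omega) (by omega) le_rfl
      (hfin _ _ (by omega) (by omega))
    have hI := tok_inv (hq 0 (by omega)) L le_rfl
    have h0 := (hq 0 (by omega)).2.1
    have hmul := Nat.mul_le_mul_left m hw.1
    rw [Nat.add_mul] at hI
    obtain ⟨k, rfl⟩ : ∃ k, m = k + 1 := ⟨m - 1, by omega⟩
    simp only [Nat.add_sub_cancel, Nat.sub_zero] at *
    have e : (k + 1) * k = k * k + k := by ring
    omega
  have hsum : ∑ j ∈ Finset.range m, cH x m (q j) (τ j) =
      ∑ j ∈ Finset.Ico 0 (0 + m - 1), cH x m (q j) (τ j) + cH x m (q (m-1)) (τ (m-1)) := by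
    obtain ⟨k, rfl⟩ : ∃ k, m = k + 1 := ⟨m - 1, by omega⟩
    rw [Finset.sum_range_succ]
    simp
  omega

theorem cut_exists (F : ℕ → ℕ) (m : ℕ) (h1 : ∀ i j, 1 ≤ i → i ≤ j → j ≤ m → F i ≤ F j)
    (h2 : ∀ j, 1 ≤ j → j ≤ m → F j ≤ F 1 + 1) : ∀ r ≤ m,
    ∃ k ≤ r, (∀ i, 1 ≤ i → i ≤ k → F i = F 1) ∧ (∀ i, k < i → i ≤ r → F i = F 1 + 1) := by
  intro r
  induction r with
  | zero => intro _; exact ⟨0, le_rfl, by intros; omega, by intros; omega⟩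
  | succ r ih =>
    intro hr
    obtain ⟨k, hk, a1, a2⟩ := ih (by omega)
    by_cases h : F (r+1) = F 1 + 1
    · refine ⟨k, by omega, a1, ?_⟩
      intro i hi hir
      by_cases e : i = r + 1
      · rw [e, h]
      · exact a2 i hi (by omega)
    · refine ⟨r+1, le_rfl, ?_, by intros; omega⟩
      intro i hi hir
      have b1 := h1 1 i le_rfl hi (by omega)
      have b2 := h1 i (r+1) hi hir hr
      have b3 := h2 (r+1) (by omega) hr
      omega

theorem lower (c m : ℕ) (hm : 1 ≤ m) (w : List Bool) (hw : IsSync c (m + 1 + c) w) :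
    ∃ t : MTree, t.size = m ∧ c * t.S + t.Q + (m - 1) * (m - 1) ≤ w.length := by
  obtain ⟨qs, hqs⟩ := hw
  set L := w.length with hL
  let x : ℕ → Bool := fun t => w.getD t false
  let p : ℕ → ℕ → ℕ := fun i t => (cernyRun c (m + 1 + c) i (w.take t)).getD 0
  have hp : ∀ i, 1 ≤ i → i ≤ m → ∀ t, cernyRun c (m + 1 + c) i (w.take t) = some (p i t) := by
    intro i h1 h2 t
    have h := hqs i (by rw [Finset.mem_Icc]; omega)
    rw [← List.take_append_drop t w] at h
    unfold cernyRun at h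
    rw [List.foldlM_append] at h
    change (cernyRun c (m + 1 + c) i (w.take t)).bind _ = _ at h
    simp only [p]
    cases hc : cernyRun c (m + 1 + c) i (w.take t) with
    | none => rw [hc] at h; simp at h
    | some y => rfl
  have hp0 : ∀ i, p i 0 = i := by
    intro i; simp [p, run_nil]
  have hpL : ∀ i, 1 ≤ i → i ≤ m → p i L = qs := by
    intro i h1 h2
    have h := hqs i (by rw [Finset.mem_Icc]; omega)
    simp [p, hL, h]
  have htok : ∀ i, 1 ≤ i → i ≤ m → Tok c m L x (p i) := by
    intro i h1 h2
    refine ⟨by rw [hp0]; exact h1, by rw [hp0]; exact h2, ?_⟩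
    intro t ht
    have e1 := hp i h1 h2 (t+1)
    have e2 : w.take (t+1) = w.take t ++ [x t] := by
      rw [List.take_succ_eq_append_getElem ht]
      have e4 : x t = w[t] := List.getD_eq_getElem _ _ ht
      rw [e4]
    rw [e2, run_app _ _ _ _ _ _ (hp i h1 h2 t)] at e1
    have e3 : cernyRun c (m + 1 + c) (p i t) [x t] = cernyStep c (m + 1 + c) (p i t) (x t) := by
      unfold cernyRun
      simp
    rw [← e3, e1]
  have X0 : ∀ i d, 1 ≤ i → i ≤ m → Xf m c (p i) d 0 = i + (m + 1) * d := by
    intro i d h1 h2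
    simp only [Xf, cL, hp0, Finset.range_zero, Finset.sum_empty, Nat.zero_add]
    rw [Nat.min_eq_left (by omega)]
  have XL : ∀ i d, 1 ≤ i → i ≤ m → Xf m c (p i) d L = min qs (m + 1) + (m + 1) *
      (cL (m + 1 + c) (p i) L + d) := by
    intro i d h1 h2
    rw [Xf, hpL i h1 h2]
  obtain ⟨k, hk, hk1, hk2⟩ := cut_exists (fun i => cL (m + 1 + c) (p i) L) m (by
      intro i j hi hij hj
      have := Xf_le (htok i hi (by omega)) (htok j (by omega) hj) 0 0 0 L (by omega) le_rfl (by
        rw [X0 i 0 hi (by omega), X0 j 0 (by omega) hj]; omega)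
      rw [XL i 0 hi (by omega), XL j 0 (by omega) hj] at this
      have := Nat.le_of_mul_le_mul_left (Nat.le_of_add_le_add_left this) (by omega)
      simpa using this) (by
      intro j hj1 hj
      have := Xf_le (htok j hj1 hj) (htok 1 le_rfl hm) 0 1 0 L (by omega) le_rfl (by
        rw [X0 j 0 hj1 hj, X0 1 1 (by omega) hm]; omega)
      rw [XL j 0 hj1 hj, XL 1 1 (by omega) hm] at this
      have := Nat.le_of_mul_le_mul_left (Nat.le_of_add_le_add_left this) (by omega)
      simpa using this) m le_rfl
  let e : ℕ → ℕ := fun j => if j < m - k then k + 1 + j else j - (m - k) + 1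
  let d : ℕ → ℕ := fun j => if j < m - k then 0 else 1
  have he : ∀ j < m, 1 ≤ e j ∧ e j ≤ m := by
    intro j hj
    simp only [e]
    split_ifs <;> omega
  have hcL : ∀ j < m, cL (m + 1 + c) (p (e j)) L + d j = cL (m + 1 + c) (p 1) L + 1 := by
    intro j hj
    by_cases h : j < m - k
    · simp only [e, d, h, if_true]
      rw [hk2 _ (by omega) (by omega)]
    · simp only [e, d, h, if_false]
      rw [hk1 _ (by omega) (by omega)]
  refine lower_abs c m L (k + 1) hm x (fun j => p (e j)) d ?_ ?_ ?_ ?_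
  · intro j hj
    exact htok _ (he j hj).1 (he j hj).2
  · intro j hj
    simp only [hp0, e, d]
    split_ifs <;> simp <;> omega
  · intro i j hij hj
    simp only [d]
    split_ifs <;> omega
  · intro i j hi hj
    rw [XL _ _ (he i hi).1 (he i hi).2, XL _ _ (he j hj).1 (he j hj).2, hcL i hi, hcL j hj]

theorem thr_le (c n : ℕ) (w : List Bool) (h : IsSync c n w) : resetThreshold c n ≤ w.length :=
  Nat.sInf_le ⟨w, rfl, h⟩

theorem thr_mem (c n : ℕ) (w : List Bool) (h : IsSync c n w) :
    ∃ v, v.length = resetThreshold c n ∧ IsSync c n v :=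
  Nat.sInf_mem (s := { L : ℕ | ∃ w : List Bool, w.length = L ∧ IsSync c n w }) ⟨_, w, rfl, h⟩

/-- **Proposition.** Let `n ≥ 6` and let `c'` with `1 ≤ c' ≤ n-3` be a local maximum of
`c ↦ r(C_n^c)`, i.e. `r(C_n^{c'-1}) ≤ r(C_n^{c'})` and `r(C_n^{c'+1}) ≤ r(C_n^{c'})`.
Then `c' < n/2`. -/
theorem local_max_lt_half (n c' : ℕ) (hn : 6 ≤ n) (hc1 : 1 ≤ c') (hc2 : c' ≤ n - 3)
    (hleft : resetThreshold (c' - 1) n ≤ resetThreshold c' n)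
    (hright : resetThreshold (c' + 1) n ≤ resetThreshold c' n) :
    2 * c' < n := by
  by_contra hcon
  have hlt : resetThreshold c' n < resetThreshold (c' - 1) n := by
    obtain ⟨N, hN⟩ : ∃ N, n = N + c' := ⟨n - c', by omega⟩
    obtain ⟨t0, ht0⟩ := MTree.exists_size N (by omega)
    obtain ⟨w0, hw0, _⟩ := upper (c' - 1) t0
    have e0 : t0.size + 1 + (c' - 1) = n := by omega
    rw [e0] at hw0
    obtain ⟨v, hv1, hv2⟩ := thr_mem _ _ _ hw0
    have e1 : n = N + 1 + (c' - 1) := by omega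
    rw [e1] at hv2
    obtain ⟨t, ht1, ht2⟩ := lower (c' - 1) N (by omega) v hv2
    obtain ⟨t', h1, h2, h3⟩ := t.del (by omega)
    have hS := t.S_le
    obtain ⟨u, hu1, hu2⟩ := upper c' t'
    rw [show t'.size + 1 + c' = n by omega] at hu1
    have hle := thr_le _ _ _ hu1
    rw [← hv1]
    refine lt_of_le_of_lt hle (lt_of_le_of_lt hu2 (lt_of_lt_of_le ?_ ht2))
    obtain ⟨k, hk⟩ : ∃ k, N = k + 3 := ⟨N - 3, by omega⟩
    obtain ⟨g, hg⟩ : ∃ g, c' = N + g := ⟨c' - N, by omega⟩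
    have e3 : t'.size = k + 2 := by omega
    rw [e3, hk, show k + 2 - 1 = k + 1 by omega, show k + 3 - 1 = k + 2 by omega]
    obtain ⟨f, hf⟩ : ∃ f, c' = f + 1 := ⟨c' - 1, by omega⟩
    have hS2 : t.S ≤ c' * t.ht := hS.trans (Nat.mul_le_mul_right _ (by omega))
    rw [hf] at hS2 ⊢
    rw [← h2] at hS2 ⊢
    rw [show f + 1 - 1 = f by omega]
    nlinarith
  omega
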